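/- arXiv:1411.4457 — 4 statements merged into one kernel-verified Lean document; each statement's English description precedes it below -/
import Mathlib

section
/- Let S_1, …, S_n be pairwise commuting Hermitian d×d complex matrices. Then there exists a d×d unitary matrix U such that for every k ∈ {1,…,n} and every index i ∈ {1,…,d}, the (i,i) entry of U·S_k·Uᴴ equals tr(S_k)/d, i.e. each U·S_k·Uᴴ has constant diagonal equal to the normalized trace of S_k. -/
/-!
Commuting Hermitian matrices have a common orthonormal eigenbasis, so a single unitary `V` makes
every `Vᴴ * S k * V` diagonal (`exists_simultaneous_diagonalization`). There is also a unitary `F`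
all of whose entries have squared modulus `1 / d`, namely the normalized discrete Fourier matrix
(`exists_flat_unitary`). Conjugating a diagonal matrix `diagonal c` by `F` gives diagonal entries
`∑ j, |F i j|² * c j = (∑ j, c j) / d`, which do not depend on `i`. Hence `U = F * Vᴴ` works,
because the trace is invariant under conjugation by `V`.
-/

open Matrix

/-- The normalized discrete Fourier matrix: a unitary whose entries all have modulus `1 / √d`. -/
lemma exists_flat_unitary (d : ℕ) (hd : 0 < d) :
    ∃ F : Matrix (Fin d) (Fin d) ℂ, Fᴴ * F = 1 ∧ ∀ i j, F i j * star (F i j) = (d : ℂ)⁻¹ := by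
  -- Writing `d = m + 1` makes `Fin d` and `ZMod d` definitionally equal.
  obtain ⟨m, rfl⟩ : ∃ m, d = m + 1 := ⟨d - 1, by omega⟩
  let ψ : AddChar (ZMod (m + 1)) ℂ := ZMod.stdAddChar
  let r : ℂ := ((√((m + 1 : ℕ) : ℝ))⁻¹ : ℝ)
  have hr : r * star r = ((m + 1 : ℕ) : ℂ)⁻¹ := by
    simp only [r, Complex.star_def, Complex.conj_ofReal]
    rw [← Complex.ofReal_mul, ← mul_inv, Real.mul_self_sqrt (by positivity)]
    push_cast
    rfl
  have hψ : ∀ a, star (ψ a) = ψ (-a) := fun a ↦ by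
    rw [AddChar.map_neg_eq_conj, Complex.star_def]
  have key : ∀ a b c : ZMod (m + 1), star (r * ψ (a * b)) * (r * ψ (a * c))
      = ((m + 1 : ℕ) : ℂ)⁻¹ * ψ (a * (c - b)) := fun a b c ↦ by
    rw [star_mul', hψ, mul_sub, sub_eq_add_neg, AddChar.map_add_eq_mul, ← hr]
    ring
  have hm : ((m + 1 : ℕ) : ℂ) ≠ 0 := Nat.cast_ne_zero.2 (Nat.succ_ne_zero m)
  let F : Matrix (ZMod (m + 1)) (ZMod (m + 1)) ℂ := of fun a b ↦ r * ψ (a * b)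
  refine ⟨F, ?_, fun i j ↦ ?_⟩
  · have : Fᴴ * F = 1 := by
      ext b c
      simp only [F, mul_apply, conjTranspose_apply, of_apply, key]
      rw [← Finset.mul_sum, AddChar.sum_mulShift _ (ZMod.isPrimitive_stdAddChar _), one_apply]
      simp only [sub_eq_zero, ZMod.card, eq_comm (a := c)]
      split_ifs
      · exact inv_mul_cancel₀ hm
      · simp
    exact this
  · have h : ∀ a b : ZMod (m + 1), F a b * star (F a b) = ((m + 1 : ℕ) : ℂ)⁻¹ := fun a b ↦ by
      rw [mul_comm]
      simp only [F, of_apply]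
      rw [key, sub_self, mul_zero, AddChar.map_zero_eq_one, mul_one]
    exact h i j

/-- The spectral theorem for a commuting family: a common orthonormal eigenbasis, packaged as
the columns of a unitary `V`. -/
lemma exists_simultaneous_diagonalization {d n : ℕ} (S : Fin n → Matrix (Fin d) (Fin d) ℂ)
    (hherm : ∀ k, (S k).IsHermitian) (hcomm : ∀ k l, Commute (S k) (S l)) :
    ∃ (V : Matrix (Fin d) (Fin d) ℂ) (c : Fin n → Fin d → ℂ),
      Vᴴ * V = 1 ∧ ∀ k, Vᴴ * S k * V = diagonal (c k) := by
  classical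
  let T : Fin n → Module.End ℂ (EuclideanSpace ℂ (Fin d)) := fun k ↦ toEuclideanLin (S k)
  have hT : ∀ k, (T k).IsSymmetric := fun k ↦ isSymmetric_toEuclideanLin_iff.2 (hherm k)
  have hC : ∀ k l, Commute (T k) (T l) := fun k l ↦ by
    ext v i
    simp [T, toEuclideanLin, toLpLin_apply, mulVec_mulVec, (hcomm k l).eq]
  let W : (Fin n → ℂ) → Submodule ℂ (EuclideanSpace ℂ (Fin d)) :=
    fun α ↦ ⨅ k, Module.End.eigenspace (T k) (α k)
  have hW : OrthogonalFamily ℂ (fun α ↦ W α) fun α ↦ (W α).subtypeₗᵢ :=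
    LinearMap.IsSymmetric.orthogonalFamily_iInf_eigenspaces hT
  have hint : DirectSum.IsInternal W :=
    LinearMap.IsSymmetric.directSum_isInternal_of_pairwise_commute hT fun k l _ ↦ hC k l
  -- A subordinate basis needs a finite index type, so only nonzero joint eigenspaces are kept.
  let ι := {α // W α ≠ ⊥}
  have : Finite ι := WellFoundedGT.finite_ne_bot_of_iSupIndep hint.submodule_iSupIndep
  have := Fintype.ofFinite ι
  have hW' : OrthogonalFamily ℂ (fun α : ι ↦ W α) fun α ↦ (W α).subtypeₗᵢ :=
    hW.comp Subtype.val_injective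
  have hint' : DirectSum.IsInternal (fun α : ι ↦ W α) := by
    rw [hW'.isInternal_iff, iSup_ne_bot_subtype, hint.submodule_iSup_eq_top,
      Submodule.top_orthogonal_eq_bot]
  have hfin : Module.finrank ℂ (EuclideanSpace ℂ (Fin d)) = d := finrank_euclideanSpace_fin
  let b := hint'.subordinateOrthonormalBasis hfin hW'
  let ix : Fin d → ι := fun j ↦ hint'.subordinateOrthonormalBasisIndex hfin j hW'
  have hb : ∀ j k, T k (b j) = (ix j).1 k • b j := fun j k ↦ by
    have h : b j ∈ W (ix j).1 := hint'.subordinateOrthonormalBasis_subordinate hfin j hW'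
    exact Module.End.mem_eigenspace_iff.1 ((Submodule.mem_iInf _).1 h k)
  let V : Matrix (Fin d) (Fin d) ℂ := of fun i j ↦ b j i
  have hV : Vᴴ * V = 1 := by
    ext i j
    have h := orthonormal_iff_ite.1 b.orthonormal i j
    rw [PiLp.inner_apply] at h
    simpa [V, mul_apply, one_apply, mul_comm] using h
  refine ⟨V, fun k j ↦ (ix j).1 k, hV, fun k ↦ ?_⟩
  have hSV : S k * V = V * diagonal fun j ↦ (ix j).1 k := by
    ext i j
    have h := congrArg (fun v : EuclideanSpace ℂ (Fin d) ↦ v i) (hb j k)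
    rw [mul_diagonal]
    simpa [T, V, toEuclideanLin, toLpLin_apply, mul_apply, mulVec, dotProduct, mul_comm] using h
  rw [Matrix.mul_assoc, hSV, ← Matrix.mul_assoc, hV, Matrix.one_mul]

/-- Any commuting tuple of Hermitian `d × d` matrices can be simultaneously conjugated
by a unitary so that each member has constant diagonal equal to its normalized trace. -/
theorem exists_unitary_constant_diagonal
    (d n : ℕ) (hd : 0 < d) (S : Fin n → Matrix (Fin d) (Fin d) ℂ)
    (hherm : ∀ k, (S k).IsHermitian)
    (hcomm : ∀ k l, Commute (S k) (S l)) :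
    ∃ U : Matrix (Fin d) (Fin d) ℂ, Uᴴ * U = 1 ∧
      ∀ (k : Fin n) (i : Fin d), (U * S k * Uᴴ) i i = (S k).trace / d := by
  obtain ⟨F, hF, hflat⟩ := exists_flat_unitary d hd
  obtain ⟨V, c, hV, hdiag⟩ := exists_simultaneous_diagonalization S hherm hcomm
  have hV' : V * Vᴴ = 1 := mul_eq_one_comm.1 hV
  refine ⟨F * Vᴴ, ?_, fun k i ↦ ?_⟩
  · calc (F * Vᴴ)ᴴ * (F * Vᴴ) = V * (Fᴴ * F) * Vᴴ := by
          simp only [conjTranspose_mul, conjTranspose_conjTranspose, Matrix.mul_assoc]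
      _ = 1 := by rw [hF, Matrix.mul_one, hV']
  · have htr : (S k).trace = ∑ j, c k j := by
      rw [← trace_diagonal, ← hdiag, trace_mul_comm, ← Matrix.mul_assoc, hV', Matrix.one_mul]
    have hconj : F * Vᴴ * S k * (F * Vᴴ)ᴴ = F * diagonal (c k) * Fᴴ := by
      simp only [← hdiag, conjTranspose_mul, conjTranspose_conjTranspose, Matrix.mul_assoc]
    rw [hconj, htr, mul_apply, div_eq_mul_inv, Finset.sum_mul]
    refine Finset.sum_congr rfl fun j _ ↦ ?_
    rw [mul_diagonal, conjTranspose_apply, ← hflat i j]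
    ring
end

section
/- Let a and b be positive irrational real numbers with a + b = 1, and let D be the 3×3 doubly stochastic matrix with rows (a, b, 0), (0, a, b), (b, 0, a). Then there is no positive integer m and no (3m)×(3m) unitary complex matrix U (indexed by pairs (j,a) with j ∈ {1,…,m}, a ∈ {1,2,3}) such that for every vector λ ∈ ℂ³, the diagonal compression of Uᴴ·(I_m ⊗ diag(λ))·U equals I_m ⊗ diag(Dλ), where Dλ denotes the product of D (viewed as a complex matrix) with λ. -/
/-!
Write `U` as a 3×3 block matrix with blocks `W i c` of size `m × m`, where `W i c` has entries
`U (j, i) (k, c)`. Reading off the diagonal of the dilation identity at `lam = Pi.single i 1`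
says that every column of `W i c` has squared norm `D c i` (`column_sq_norm`). The zeros of `D`
therefore kill the blocks `W 2 0`, `W 0 1` and `W 1 2`. Block columns `0` and `2` of `U` then
overlap only in block row `0`, so unitarity gives `(W 0 0)ᴴ * W 0 2 = 0` and
`W 0 0 * (W 0 0)ᴴ + W 0 2 * (W 0 2)ᴴ = 1`. These force `W 0 0 * (W 0 0)ᴴ` to be idempotent
(`idempotent_of_orthogonal`), so its trace is a natural number (`trace_eq_natCast`). But this
trace is also the sum `m * a` of the squared column norms of `W 0 0`, which is irrational.
-/

open Matrix
open scoped Kronecker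

/-- The diagonal compression of a square complex matrix: it keeps the diagonal
entries and sets all off-diagonal entries to zero. -/
def diagCompress {n : Type*} [DecidableEq n] (M : Matrix n n ℂ) : Matrix n n ℂ :=
  Matrix.diagonal (Matrix.diag M)

/-- The trace of an idempotent complex matrix is the dimension of its range. -/
theorem trace_eq_natCast {n : Type*} [Fintype n] [DecidableEq n] (P : Matrix n n ℂ)
    (hP : P * P = P) : ∃ r : ℕ, P.trace = r := by
  have h : IsIdempotentElem (Matrix.toLin' P) := by
    rw [IsIdempotentElem, Module.End.mul_eq_comp, ← Matrix.toLin'_mul, hP]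
  have ht := ((LinearMap.isProj_range_iff_isIdempotentElem _).2 h).trace
  rw [Matrix.trace_toLin'_eq] at ht
  exact ⟨_, ht⟩

/-- Multiplying `A * Aᴴ + B * Bᴴ = 1` by `A * Aᴴ` kills the second summand. -/
theorem idempotent_of_orthogonal {n : Type*} [Fintype n] [DecidableEq n] (A B : Matrix n n ℂ)
    (horth : Aᴴ * B = 0) (hsum : A * Aᴴ + B * Bᴴ = 1) :
    (A * Aᴴ) * (A * Aᴴ) = A * Aᴴ := by
  have h : (A * Aᴴ) * (B * Bᴴ) = 0 := by
    rw [Matrix.mul_assoc, ← Matrix.mul_assoc Aᴴ, horth]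
    simp
  calc (A * Aᴴ) * (A * Aᴴ) = (A * Aᴴ) * (A * Aᴴ + B * Bᴴ) := by rw [Matrix.mul_add, h, add_zero]
    _ = A * Aᴴ := by rw [hsum, Matrix.mul_one]

/-- The dilation identity, tested on the basis vector `lam = Pi.single i 1`, prescribes the
squared norm of each column of the block of `U` in block row `i` and block column `c`. -/
theorem column_sq_norm {m : ℕ} {D : Matrix (Fin 3) (Fin 3) ℝ}
    {U : Matrix (Fin m × Fin 3) (Fin m × Fin 3) ℂ}
    (h : ∀ lam : Fin 3 → ℂ,
      diagCompress (Uᴴ * ((1 : Matrix (Fin m) (Fin m) ℂ) ⊗ₖ Matrix.diagonal lam) * U)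
        = (1 : Matrix (Fin m) (Fin m) ℂ) ⊗ₖ
            Matrix.diagonal ((D.map fun x => (x : ℂ)) *ᵥ lam))
    (i c : Fin 3) (k : Fin m) :
    ∑ j, ‖U (j, i) (k, c)‖ ^ 2 = D c i := by
  have h1 := congrFun (congrFun (h (Pi.single i 1)) (k, c)) (k, c)
  have hdiag : (1 : Matrix (Fin m) (Fin m) ℂ) ⊗ₖ Matrix.diagonal (Pi.single i (1 : ℂ))
      = Matrix.diagonal fun p : Fin m × Fin 3 => (Pi.single i (1 : ℂ) : Fin 3 → ℂ) p.2 := by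
    rw [← Matrix.diagonal_one, Matrix.diagonal_kronecker_diagonal]
    simp
  rw [hdiag] at h1
  simp only [diagCompress, Matrix.diagonal_apply_eq, Matrix.diag_apply, Matrix.kroneckerMap_apply,
    Matrix.one_apply_eq, one_mul, Matrix.mulVec_single_one, Matrix.col_apply, Matrix.map_apply] at h1
  rw [Matrix.mul_apply, Fintype.sum_prod_type] at h1
  simp only [Matrix.mul_diagonal, Matrix.conjTranspose_apply, Pi.single_apply, mul_ite, mul_one,
    mul_zero, ite_mul, zero_mul, Finset.sum_ite_eq', Finset.mem_univ, if_true] at h1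
  have h2 : ∀ z : ℂ, star z * z = ((‖z‖ ^ 2 : ℝ) : ℂ) := fun z => by
    push_cast
    exact Complex.conj_mul' z
  simp only [h2] at h1
  exact_mod_cast h1

/-- A zero of `D` kills the corresponding block of `U`. -/
theorem block_eq_zero {m : ℕ} {d : ℝ} {U : Matrix (Fin m × Fin 3) (Fin m × Fin 3) ℂ}
    {i c : Fin 3} (h : ∀ k, ∑ j, ‖U (j, i) (k, c)‖ ^ 2 = d) (hd : d = 0) (j k : Fin m) :
    U (j, i) (k, c) = 0 := by
  have h1 := (Finset.sum_eq_zero_iff_of_nonneg fun j _ => sq_nonneg _).1 ((h k).trans hd) j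
    (Finset.mem_univ j)
  simpa using h1

/-- For positive irrationals `a, b` with `a + b = 1` and the doubly stochastic matrix
`D` with rows `(a,b,0), (0,a,b), (b,0,a)`, there is no `m ≥ 1` and no unitary
`U ∈ M_{3m}(ℂ)` with `E_{3m}(Uᴴ (I_m ⊗ diag(λ)) U) = I_m ⊗ diag(Dλ)` for all `λ ∈ ℂ³`. -/
theorem no_unitary_dilation_of_irrational_circulant
    (a b : ℝ) (ha : 0 < a) (hb : 0 < b)
    (hia : Irrational a) (hib : Irrational b) (hab : a + b = 1)
    (D : Matrix (Fin 3) (Fin 3) ℝ)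
    (hD : D = !![a, b, 0; 0, a, b; b, 0, a]) :
    ¬ ∃ (m : ℕ), 0 < m ∧
      ∃ U : Matrix (Fin m × Fin 3) (Fin m × Fin 3) ℂ, Uᴴ * U = 1 ∧
        ∀ lam : Fin 3 → ℂ,
          diagCompress (Uᴴ * ((1 : Matrix (Fin m) (Fin m) ℂ) ⊗ₖ Matrix.diagonal lam) * U)
            = (1 : Matrix (Fin m) (Fin m) ℂ) ⊗ₖ
                Matrix.diagonal ((D.map fun x => (x : ℂ)) *ᵥ lam) := by
  rintro ⟨m, hm, U, hU, h⟩
  have hU' : U * Uᴴ = 1 := mul_eq_one_comm.1 hU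
  have hcol := column_sq_norm h
  have z20 := block_eq_zero (hcol 2 0) (by simp [hD])
  have z01 := block_eq_zero (hcol 0 1) (by simp [hD])
  have z12 := block_eq_zero (hcol 1 2) (by simp [hD])
  let A : Matrix (Fin m) (Fin m) ℂ := Matrix.of fun j k => U (j, 0) (k, 0)
  let B : Matrix (Fin m) (Fin m) ℂ := Matrix.of fun j k => U (j, 0) (k, 2)
  have horth : Aᴴ * B = 0 := by
    ext k l
    have := congrFun (congrFun hU (k, 0)) (l, 2)
    rw [Matrix.mul_apply, Fintype.sum_prod_type] at this
    simpa [A, B, Matrix.mul_apply, Fin.sum_univ_three, z20, z12] using this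
  have hsum : A * Aᴴ + B * Bᴴ = 1 := by
    ext k l
    have := congrFun (congrFun hU' (k, 0)) (l, 0)
    rw [Matrix.mul_apply, Fintype.sum_prod_type] at this
    simpa [A, B, Matrix.mul_apply, Fin.sum_univ_three, z01, Finset.sum_add_distrib,
      Matrix.one_apply] using this
  obtain ⟨r, hr⟩ := trace_eq_natCast _ (idempotent_of_orthogonal A B horth hsum)
  have htr : (A * Aᴴ).trace = ((m * a : ℝ) : ℂ) := by
    have hterm : ∀ k, (Aᴴ * A) k k = (a : ℂ) := fun k => by
      have hk := hcol 0 0 k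
      simp only [hD] at hk
      rw [Matrix.mul_apply]
      simp only [A, Matrix.conjTranspose_apply, Matrix.of_apply]
      have h2 : ∀ z : ℂ, star z * z = ((‖z‖ ^ 2 : ℝ) : ℂ) := fun z => by
        push_cast
        exact Complex.conj_mul' z
      simp only [h2]
      exact_mod_cast hk
    rw [Matrix.trace_mul_comm, Matrix.trace]
    simp [hterm]
  have hma : (m * a : ℝ) = r := by exact_mod_cast htr.symm.trans hr
  exact (hia.natCast_mul hm.ne').ne_nat r hma
end

section
/- Let D be a d×d doubly stochastic matrix and let ε > 0. Then there exist a positive integer m and an (m·d)×(m·d) unitary complex matrix U such that for every vector β ∈ ℂᵈ, the operator norm of the difference between the diagonal compression of U·(I_m ⊗ diag(β))·Uᴴ and I_m ⊗ diag(Dβ) is at most ε·‖diag(β)‖, where ‖diag(β)‖ = max_i |β_i| is the operator norm of diag(β) and Dβ denotes the product of D (viewed as a complex matrix) with β. -/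
/-!
By Birkhoff's theorem `D` is a convex combination of permutation matrices, and approximating the
weights by rationals with a common denominator `m` (`exists_uniform_approx`) makes `D` close to an
average `(1/m) ∑ₖ P_{s k}` over a list `s` of `m` permutations. Let `F` be the `m × m` unitary
Fourier matrix (`exists_flat_unitary`); only the fact that `|F j k|² = 1/m` for all `j, k` matters.
The product `U` of `F ⊗ I_d` with the block diagonal matrix of the `P_{s k}` is unitary, with entries
`U (j, a) (k, b) = F j k * P_{s k} a b`. Hence the `(j, a)` diagonal entry of `U (I ⊗ diag β) Uᴴ` is
`∑ₖ |F j k|² β (s k a) = (1/m) ∑ₖ β (s k a)`, which is independent of `j` and close to `(D β) a`,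
uniformly for `β` in the unit ball of the sup norm.
-/

open Matrix
open scoped Kronecker

/-- The operator norm of a square complex matrix, i.e. its norm as an operator
on Euclidean (ℓ²) space. -/
noncomputable def l2OpNorm {n : Type*} [Fintype n] [DecidableEq n]
    (A : Matrix n n ℂ) : ℝ :=
  ‖Matrix.toEuclideanCLM (𝕜 := ℂ) A‖

/-- A probability vector `w` on a finite type is close in `ℓ¹` to the empirical distribution of a
finite list `s`, stated through averages of bounded functions. The list contains each `x` exactly
`⌈N * w x⌉` times, where `N` is large. -/
lemma exists_uniform_approx {S : Type*} [Fintype S] (w : S → ℝ) (hw : ∀ x, 0 ≤ w x)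
    (hw1 : ∑ x, w x = 1) (ε : ℝ) (hε : 0 < ε) :
    ∃ m : ℕ, 0 < m ∧ ∃ s : Fin m → S, ∀ (f : S → ℂ) (C : ℝ), (∀ x, ‖f x‖ ≤ C) →
      ‖(m : ℂ)⁻¹ * ∑ k, f (s k) - ∑ x, (w x : ℂ) * f x‖ ≤ ε * C := by
  classical
  obtain ⟨N, hN⟩ := exists_nat_gt ((Fintype.card S : ℝ) ^ 2 / ε)
  have hNpos : (0 : ℝ) < N := lt_of_le_of_lt (by positivity) hN
  have hSne : Nonempty S := by
    by_contra h
    rw [not_nonempty_iff] at h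
    simp at hw1
  obtain ⟨x₀⟩ := hSne
  have hcard : (1 : ℝ) ≤ Fintype.card S := by
    exact_mod_cast Fintype.card_pos_iff.2 ⟨x₀⟩
  set n : S → ℕ := fun x => ⌈N * w x⌉₊ with hn
  set m : ℕ := ∑ x, n x with hm
  have hn1 : ∀ x, N * w x ≤ n x := fun x => Nat.le_ceil _
  have hn2 : ∀ x, (n x : ℝ) ≤ N * w x + 1 := fun x =>
    (Nat.ceil_lt_add_one (mul_nonneg hNpos.le (hw x))).le
  have hm1 : (N : ℝ) ≤ m := by
    calc (N : ℝ) = ∑ x, N * w x := by rw [← Finset.mul_sum, hw1, mul_one]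
      _ ≤ ∑ x, (n x : ℝ) := Finset.sum_le_sum fun x _ => hn1 x
      _ = m := by rw [hm]; push_cast; rfl
  have hm2 : (m : ℝ) ≤ N + Fintype.card S := by
    calc (m : ℝ) = ∑ x, (n x : ℝ) := by rw [hm]; push_cast; rfl
      _ ≤ ∑ x, (N * w x + 1) := Finset.sum_le_sum fun x _ => hn2 x
      _ = N + Fintype.card S := by
        rw [Finset.sum_add_distrib, ← Finset.mul_sum, hw1]; simp
  have hmpos : (0 : ℝ) < m := hNpos.trans_le hm1
  have hwle : ∀ x, w x ≤ 1 := fun x => by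
    rw [← hw1]; exact Finset.single_le_sum (fun y _ => hw y) (Finset.mem_univ x)
  -- rounding up changes each `N * w x` by at most `1` and the total `N` by at most `card S`
  have herr : ∀ x, |(n x : ℝ) - m * w x| ≤ Fintype.card S := fun x => by
    rw [abs_le]
    constructor
    · nlinarith [hn1 x, hw x, hwle x,
        mul_le_mul_of_nonneg_left (hwle x) (sub_nonneg.2 hm1)]
    · nlinarith [hn2 x, hw x, mul_le_mul_of_nonneg_right hm1 (hw x)]
  let e : (Σ x, Fin (n x)) ≃ Fin m := Fintype.equivFinOfCardEq (by simp [hm])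
  refine ⟨m, by exact_mod_cast hmpos, fun k => (e.symm k).1, fun f C hC => ?_⟩
  have hC0 : 0 ≤ C := (norm_nonneg _).trans (hC x₀)
  have hsum : ∑ k, f (e.symm k).1 = ∑ x, (n x : ℂ) * f x := by
    rw [Equiv.sum_comp e.symm (fun y : Σ x, Fin (n x) => f y.1), Fintype.sum_sigma]
    simp
  have hmc : (m : ℂ) ≠ 0 := by
    have : (m : ℝ) ≠ 0 := hmpos.ne'
    exact_mod_cast this
  have hdiff : (m : ℂ)⁻¹ * ∑ k, f (e.symm k).1 - ∑ x, (w x : ℂ) * f x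
      = (m : ℂ)⁻¹ * ∑ x, (((n x : ℝ) - m * w x : ℝ) : ℂ) * f x := by
    rw [hsum, eq_inv_mul_iff_mul_eq₀ hmc, mul_sub, mul_inv_cancel_left₀ hmc, Finset.mul_sum,
      ← Finset.sum_sub_distrib]
    refine Finset.sum_congr rfl fun x _ => ?_
    push_cast
    ring
  rw [hdiff, norm_mul, norm_inv, Complex.norm_natCast]
  have hbound : ‖∑ x, (((n x : ℝ) - m * w x : ℝ) : ℂ) * f x‖ ≤ (Fintype.card S : ℝ) ^ 2 * C := by
    calc _ ≤ ∑ _x : S, (Fintype.card S : ℝ) * C := by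
          refine norm_sum_le_of_le _ fun x _ => ?_
          rw [norm_mul, Complex.norm_real, Real.norm_eq_abs]
          exact mul_le_mul (herr x) (hC x) (norm_nonneg _) (by positivity)
      _ = _ := by simp; ring
  rw [inv_mul_le_iff₀ hmpos]
  rw [div_lt_iff₀ hε] at hN
  calc _ ≤ _ := hbound
    _ ≤ (m * ε) * C := by
      refine mul_le_mul_of_nonneg_right (hN.le.trans ?_) hC0
      exact mul_le_mul_of_nonneg_right hm1 hε.le
    _ = _ := by ring

/-- There is a unitary matrix of every positive size all of whose entries have the same modulus,
namely the normalized Fourier matrix of `ZMod m`. -/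
lemma exists_flat_unitary_s7 (m : ℕ) (hm : 0 < m) :
    ∃ F : Fin m → Fin m → ℂ, (∀ j k, F j k * star (F j k) = (m : ℂ)⁻¹) ∧
      ∀ k l, ∑ j, star (F j k) * F j l = if k = l then 1 else 0 := by
  have : NeZero m := ⟨hm.ne'⟩
  let e : Fin m ≃ ZMod m := (ZMod.finEquiv m).toEquiv
  let ψ := ZMod.stdAddChar (N := m)
  have hmc : (m : ℂ) ≠ 0 := by exact_mod_cast hm.ne'
  have hstar : ∀ x, star (ψ x) = ψ (-x) := fun x => (AddChar.map_neg_eq_conj ψ x).symm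
  have hsqrt : ((Real.sqrt m : ℝ) : ℂ)⁻¹ * ((Real.sqrt m : ℝ) : ℂ)⁻¹ = (m : ℂ)⁻¹ := by
    rw [← mul_inv, ← Complex.ofReal_mul, Real.mul_self_sqrt (Nat.cast_nonneg m)]
    simp
  have hstar' : star (((Real.sqrt m : ℝ) : ℂ)⁻¹) = ((Real.sqrt m : ℝ) : ℂ)⁻¹ := by
    rw [star_inv₀]
    simp
  refine ⟨fun j k => ((Real.sqrt m : ℝ) : ℂ)⁻¹ * ψ (e j * e k), fun j k => ?_, fun k l => ?_⟩
  · rw [star_mul', hstar', hstar, mul_mul_mul_comm, hsqrt, ← AddChar.map_add_eq_mul]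
    simp
  · have h1 : ∀ j, star (((Real.sqrt m : ℝ) : ℂ)⁻¹ * ψ (e j * e k)) *
        (((Real.sqrt m : ℝ) : ℂ)⁻¹ * ψ (e j * e l)) = (m : ℂ)⁻¹ * ψ (e j * (e l - e k)) := by
      intro j
      rw [star_mul', hstar', hstar, mul_mul_mul_comm, hsqrt, ← AddChar.map_add_eq_mul]
      congr 2
      ring
    simp_rw [h1]
    rw [← Finset.mul_sum, Equiv.sum_comp e (fun x => ψ (x * (e l - e k))),
      AddChar.sum_mulShift _ (ZMod.isPrimitive_stdAddChar m)]
    by_cases h : k = l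
    · subst h
      simp [hmc]
    · have : e l - e k ≠ 0 := fun h' => h (e.injective (sub_eq_zero.1 h')).symm
      simp [h, this]

lemma l2OpNorm_diagonal {n : Type*} [Fintype n] [DecidableEq n] (v : n → ℂ) :
    l2OpNorm (Matrix.diagonal v) = ‖v‖ :=
  Matrix.l2_opNorm_diagonal v

/-- Approximate dilation: for any `d × d` doubly stochastic matrix `D` and `ε > 0`
there are `m ≥ 1` and a unitary `U ∈ M_{m·d}(ℂ)` such that for all `β ∈ ℂᵈ`,
`‖E_{m·d}(U (I_m ⊗ diag(β)) Uᴴ) - I_m ⊗ diag(Dβ)‖ ≤ ε ‖diag(β)‖`. -/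
theorem exists_approximate_unitary_dilation_of_doublyStochastic
    (d : ℕ) (D : Matrix (Fin d) (Fin d) ℝ)
    (hpos : ∀ i j, 0 ≤ D i j)
    (hrow : ∀ i, ∑ j, D i j = 1)
    (hcol : ∀ j, ∑ i, D i j = 1)
    (ε : ℝ) (hε : 0 < ε) :
    ∃ (m : ℕ), 0 < m ∧
      ∃ U : Matrix (Fin m × Fin d) (Fin m × Fin d) ℂ, Uᴴ * U = 1 ∧
        ∀ β : Fin d → ℂ,
          l2OpNorm
              (diagCompress (U * ((1 : Matrix (Fin m) (Fin m) ℂ) ⊗ₖ Matrix.diagonal β) * Uᴴ)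
                - (1 : Matrix (Fin m) (Fin m) ℂ) ⊗ₖ
                    Matrix.diagonal ((D.map fun x => (x : ℂ)) *ᵥ β))
            ≤ ε * l2OpNorm (Matrix.diagonal β) := by
  obtain ⟨w, hw0, hw1, hwD⟩ := exists_eq_sum_perm_of_mem_doublyStochastic
    (mem_doublyStochastic_iff_sum.2 ⟨hpos, hrow, hcol⟩)
  obtain ⟨m, hm, s, hs⟩ := exists_uniform_approx w hw0 hw1 ε hε
  obtain ⟨F, hF1, hF2⟩ := exists_flat_unitary_s7 m hm
  obtain ⟨U, hU⟩ : ∃ U : Matrix (Fin m × Fin d) (Fin m × Fin d) ℂ,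
      ∀ j a k b, U (j, a) (k, b) = F j k * if s k a = b then 1 else 0 :=
    ⟨fun p q => F p.1 q.1 * if s q.1 p.2 = q.2 then 1 else 0, fun _ _ _ _ => rfl⟩
  have hK : ∀ v : Fin d → ℂ, (1 : Matrix (Fin m) (Fin m) ℂ) ⊗ₖ Matrix.diagonal v
      = Matrix.diagonal fun p => v p.2 := by
    intro v
    rw [← Matrix.diagonal_one, Matrix.diagonal_kronecker_diagonal]
    simp
  refine ⟨m, hm, U, ?_, fun β => ?_⟩
  · ext ⟨k, b⟩ ⟨l, c⟩
    -- the Gram entries factor through those of `F` and of the permutation matrices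
    have h : (Uᴴ * U) (k, b) (l, c) = (∑ j, star (F j k) * F j l) *
        ∑ a, (if s k a = b then 1 else 0) * (if s l a = c then 1 else 0) := by
      rw [Matrix.mul_apply, Fintype.sum_prod_type, Finset.sum_mul_sum]
      refine Finset.sum_congr rfl fun j _ => Finset.sum_congr rfl fun a _ => ?_
      rw [Matrix.conjTranspose_apply, hU, hU, star_mul']
      split_ifs <;> simp
    rw [h, hF2, Matrix.one_apply]
    by_cases hkl : k = l
    · subst hkl
      rw [Equiv.sum_comp (s k) fun a => (if a = b then (1 : ℂ) else 0) * if a = c then 1 else 0]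
      simp [eq_comm]
    · simp [hkl]
  · have hdiag : ∀ j a, (U * ((1 : Matrix (Fin m) (Fin m) ℂ) ⊗ₖ Matrix.diagonal β) * Uᴴ)
        (j, a) (j, a) = (m : ℂ)⁻¹ * ∑ k, β (s k a) := by
      intro j a
      rw [hK, Matrix.mul_apply, Fintype.sum_prod_type, Finset.mul_sum]
      refine Finset.sum_congr rfl fun k _ => ?_
      simp only [Matrix.mul_diagonal, Matrix.conjTranspose_apply, hU]
      rw [Finset.sum_eq_single (s k a)]
      · rw [← hF1 j k]
        simp
        ring
      · intro b _ hb
        simp [hb.symm]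
      · simp
    have hD : ∀ a, ((D.map fun x => (x : ℂ)) *ᵥ β) a = ∑ π, (w π : ℂ) * β (π a) := by
      intro a
      have h : ∀ b, (D.map fun x => (x : ℂ)) a b
          = ∑ π : Equiv.Perm (Fin d), (w π : ℂ) * if π a = b then 1 else 0 := by
        intro b
        rw [Matrix.map_apply, ← hwD, Matrix.sum_apply]
        push_cast
        refine Finset.sum_congr rfl fun π _ => ?_
        by_cases h : π a = b
        · simp [Equiv.Perm.permMatrix, PEquiv.toMatrix_apply, h]
        · simp [Equiv.Perm.permMatrix, PEquiv.toMatrix_apply, h]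
      simp only [Matrix.mulVec, dotProduct, h, Finset.sum_mul]
      rw [Finset.sum_comm]
      refine Finset.sum_congr rfl fun π _ => ?_
      simp
    rw [diagCompress, hK ((D.map fun x => (x : ℂ)) *ᵥ β), Matrix.diagonal_sub, l2OpNorm_diagonal,
      l2OpNorm_diagonal, pi_norm_le_iff_of_nonneg (by positivity)]
    rintro ⟨j, a⟩
    rw [Matrix.diag_apply, hdiag, hD]
    exact hs (fun π => β (π a)) ‖β‖ fun π => norm_le_pi_norm β _
end

section
/- Let λ, μ ∈ ℂᵈ and let S = diag(λ) and A = diag(μ) be d×d diagonal complex matrices. Then there exists a doubly stochastic linear map Φ on the d×d complex matrices with Φ(S) = A if and only if there exists a d×d doubly stochastic matrix D with Dλ = μ (where D acts on λ as a complex matrix). -/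
open Matrix
open scoped ComplexOrder

/-!
The correspondence compresses a map to the diagonal. Given `Φ`, the matrix with entries
`D i j = Φ(E_jj)_ii`, where the `E_jj` are the diagonal matrix units, is doubly stochastic:
positivity of `Φ` makes its entries nonnegative reals, `∑ j, E_jj = 1` together with unitality
gives the row sums, and trace preservation applied to each `E_jj` gives the column sums. Reading
off the diagonal of `Φ (diag λ) = ∑ j, λ j • Φ(E_jj)` yields `D λ = μ`
(`map_diagonal_apply`). Conversely, `D` induces the doubly stochastic map
`X ↦ diag (D *ᵥ X.diag)`, which sends `diag λ` to `diag (D λ)`.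
-/

/-- A linear map, compressed to the diagonal, acts by the matrix `Φ(E_jj)_ii` of its diagonal
values on the diagonal matrix units. -/
lemma map_diagonal_apply {d : ℕ}
    (Φ : Matrix (Fin d) (Fin d) ℂ →ₗ[ℂ] Matrix (Fin d) (Fin d) ℂ) (v : Fin d → ℂ) (i : Fin d) :
    Φ (Matrix.diagonal v) i i =
      ∑ j, Φ (Matrix.diagonal (Pi.single j 1)) i i * v j := by
  have h : Matrix.diagonal v =
      ∑ j, v j • (Matrix.diagonal (Pi.single j 1) : Matrix (Fin d) (Fin d) ℂ) := by
    ext a b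
    by_cases hab : a = b
    · subst hab
      simp [Matrix.sum_apply, Pi.single_apply]
    · simp [Matrix.sum_apply, hab]
  rw [h, map_sum, Matrix.sum_apply]
  simp [mul_comm]

/-- For diagonal complex matrices `S = diag(λ)` and `A = diag(μ)`, there is a doubly
stochastic map (a positive, unital, trace-preserving linear map on `M_d(ℂ)`) sending
`S` to `A` if and only if there is a `d × d` doubly stochastic matrix `D` with
`Dλ = μ`. -/
theorem diagonal_doublyStochastic_map_iff_doublyStochastic_matrix
    (d : ℕ) (lam mu : Fin d → ℂ) :
    (∃ Φ : Matrix (Fin d) (Fin d) ℂ →ₗ[ℂ] Matrix (Fin d) (Fin d) ℂ,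
        (∀ X : Matrix (Fin d) (Fin d) ℂ, X.PosSemidef → (Φ X).PosSemidef) ∧
        Φ 1 = 1 ∧
        (∀ X : Matrix (Fin d) (Fin d) ℂ, (Φ X).trace = X.trace) ∧
        Φ (Matrix.diagonal lam) = Matrix.diagonal mu) ↔
    (∃ D : Matrix (Fin d) (Fin d) ℝ,
        (∀ i j, 0 ≤ D i j) ∧
        (∀ i, ∑ j, D i j = 1) ∧
        (∀ j, ∑ i, D i j = 1) ∧
        (D.map fun x => (x : ℂ)) *ᵥ lam = mu) := by
  constructor
  · rintro ⟨Φ, hpos, hone, htr, hΦ⟩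
    have hnn : ∀ i j, 0 ≤ Φ (Matrix.diagonal (Pi.single j 1)) i i := by
      intro i j
      refine (hpos _ (Matrix.PosSemidef.diagonal ?_)).diag_nonneg
      exact Pi.single_nonneg.2 zero_le_one
    have hre : ∀ i j, (((Φ (Matrix.diagonal (Pi.single j 1)) i i).re : ℝ) : ℂ) =
        Φ (Matrix.diagonal (Pi.single j 1)) i i := fun i j =>
      (Complex.eq_re_of_ofReal_le (hnn i j)).symm
    refine ⟨fun i j => (Φ (Matrix.diagonal (Pi.single j 1)) i i).re, ?_, ?_, ?_, ?_⟩
    · intro i j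
      exact (Complex.le_def.1 (hnn i j)).1
    · intro i
      have h := map_diagonal_apply Φ (fun _ => 1) i
      rw [Matrix.diagonal_one, hone] at h
      simpa using (congrArg Complex.re h).symm
    · intro j
      have h := htr (Matrix.diagonal (Pi.single j 1))
      rw [Matrix.trace_diagonal] at h
      simpa [Matrix.trace] using congrArg Complex.re h
    · funext i
      have h := map_diagonal_apply Φ lam i
      rw [hΦ, Matrix.diagonal_apply_eq] at h
      rw [h]
      simp only [Matrix.mulVec, dotProduct, Matrix.map, Matrix.of_apply, hre]
  · rintro ⟨D, hD, hrow, hcol, rfl⟩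
    obtain ⟨Φ, hΦ⟩ : ∃ Φ : Matrix (Fin d) (Fin d) ℂ →ₗ[ℂ] Matrix (Fin d) (Fin d) ℂ,
        ∀ X, Φ X = Matrix.diagonal fun i => ∑ j, (D i j : ℂ) * X j j :=
      ⟨Matrix.diagonalLinearMap (Fin d) ℂ ℂ ∘ₗ (D.map fun x => (x : ℂ)).mulVecLin ∘ₗ
        Matrix.diagLinearMap (Fin d) ℂ ℂ, fun _ => rfl⟩
    have hr : ∀ i, ∑ j, (D i j : ℂ) = 1 := fun i => by exact_mod_cast hrow i
    have hc : ∀ j, ∑ i, (D i j : ℂ) = 1 := fun j => by exact_mod_cast hcol j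
    refine ⟨Φ, fun X hX => ?_, ?_, fun X => ?_, ?_⟩
    · rw [hΦ]
      refine Matrix.PosSemidef.diagonal fun i => Finset.sum_nonneg fun j _ => ?_
      exact mul_nonneg (Complex.zero_le_real.2 (hD i j)) hX.diag_nonneg
    · simp [hΦ, hr]
    · rw [hΦ, Matrix.trace_diagonal, Finset.sum_comm]
      simp [← Finset.sum_mul, hc, Matrix.trace]
    · simp only [hΦ, Matrix.diagonal_apply_eq]
      rfl
end
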